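/- Let k ≥ 1 and let e₁,…,e_k be integers with e_i ≥ 2 for all i and e_j ≥ 3 for at least one j. Then the 2×2 integer matrix A = [[0,-1],[1,e_k]] · [[0,-1],[1,e_{k-1}]] ⋯ [[0,-1],[1,e₁]] has trace at least 3. -/

import Mathlib

/-- The matrix `[[0,-1],[1,x]]`. -/
def Mb (x : ℤ) : Matrix (Fin 2) (Fin 2) ℤ := !![0, -1; 1, x]

/-- The product `[[0,-1],[1,e_k]] ⋯ [[0,-1],[1,e₁]]` for a list `[e₁,…,e_k]`. -/
def prodB (L : List ℤ) : Matrix (Fin 2) (Fin 2) ℤ := ((L.map Mb).reverse).prod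

theorem prodB_append_singleton (L : List ℤ) (x : ℤ) :
    prodB (L ++ [x]) = Mb x * prodB L := by
  simp [prodB]

/-- Entrywise bounds for `prodB L`, stable under left multiplication by `Mb x` with `2 ≤ x`. -/
theorem prodB_entry_bounds (L : List ℤ) (hL : ∀ x ∈ L, 2 ≤ x) :
    0 ≤ prodB L 1 0 ∧ 1 ≤ prodB L 0 0 + prodB L 1 0 ∧ 1 ≤ prodB L 1 1 - prodB L 1 0 ∧
      prodB L 0 0 + prodB L 1 0 ≤ prodB L 0 1 + prodB L 1 1 ∧
      ((∃ x ∈ L, 3 ≤ x) → 3 ≤ prodB L 0 0 + prodB L 1 1) := by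
  induction L using List.reverseRecOn with
  | nil => simp [prodB]
  | append_singleton L x ih =>
    have hx : 2 ≤ x := hL x (by simp)
    obtain ⟨hc, hu, hw, hv, h3⟩ := ih fun y hy => hL y (by simp [hy])
    rw [prodB_append_singleton]
    simp only [Mb, Matrix.mul_apply, Fin.sum_univ_two, Matrix.of_apply, Matrix.cons_val',
      Matrix.cons_val_zero, Matrix.cons_val_one, Matrix.cons_val_fin_one]
    generalize prodB L 0 0 = a at *
    generalize prodB L 0 1 = b at *
    generalize prodB L 1 0 = c at *
    generalize prodB L 1 1 = d at *
    have hxc : 0 ≤ (x - 2) * c := mul_nonneg (by linarith) hc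
    have hxw : 0 ≤ (x - 2) * (d - c - 1) := mul_nonneg (by linarith) (by linarith)
    refine ⟨by linarith, by linarith, by linarith, by linarith, ?_⟩
    rintro ⟨y, hy, hy3⟩
    rcases List.mem_append.1 hy with hy | hy
    · linarith [h3 ⟨y, hy, hy3⟩]
    · obtain rfl : y = x := by simpa using hy
      linarith

theorem stmt_6 (k : ℕ) (hk : 1 ≤ k) (e : Fin k → ℤ)
    (he : ∀ i, 2 ≤ e i) (h3 : ∃ j, 3 ≤ e j) :
    3 ≤ Matrix.trace (prodB (List.ofFn e)) := by
  rw [Matrix.trace_fin_two]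
  obtain ⟨j, hj⟩ := h3
  refine (prodB_entry_bounds (List.ofFn e) ?_).2.2.2.2 ⟨e j, by simp, hj⟩
  simpa [List.mem_ofFn] using he
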